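/- arXiv:2201.10082 — 4 statements merged into one kernel-verified Lean document; each statement's English description precedes it below -/
import Mathlib

section
/- Let n ≥ 2 be an integer and let f : [0,1] → [0,1] be a nondecreasing function such that f(ε) ≤ n·ε for every ε ∈ [0,1]. Suppose ε* ∈ [n^{−3}, 1] satisfies f(ε*) ≤ n^{−9}. Then ∫_0^1 (f(ε)/ε) dε ≤ 1/n² + 1/n⁶ − ln(ε*). -/
open MeasureTheory

/-- Let `n ≥ 2` and let `f : [0,1] → [0,1]` be nondecreasing with
`f(ε) ≤ nε` on `[0,1]`. If `ε* ∈ [n^{−3}, 1]` satisfies `f(ε*) ≤ n^{−9}`, then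
`∫_0^1 f(ε)/ε dε ≤ 1/n² + 1/n⁶ − ln ε*`. -/
theorem core_integral_estimate (n : ℕ) (hn : 2 ≤ n) (f : ℝ → ℝ)
    (hf_mem : ∀ ε ∈ Set.Icc (0:ℝ) 1, f ε ∈ Set.Icc (0:ℝ) 1)
    (hf_mono : MonotoneOn f (Set.Icc (0:ℝ) 1))
    (hf_le : ∀ ε ∈ Set.Icc (0:ℝ) 1, f ε ≤ (n:ℝ) * ε)
    (εs : ℝ) (hεs : εs ∈ Set.Icc (1 / (n:ℝ) ^ 3) 1)
    (hfεs : f εs ≤ 1 / (n:ℝ) ^ 9) :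
    ∫ ε in Set.Ioc (0:ℝ) 1, f ε / ε ≤
      1 / (n:ℝ) ^ 2 + 1 / (n:ℝ) ^ 6 - Real.log εs := by
  have hn0 : (2:ℝ) ≤ n := by exact_mod_cast hn
  have hnpos : (0:ℝ) < n := by linarith
  obtain ⟨h1, h2⟩ := hεs
  set a : ℝ := 1 / (n:ℝ) ^ 3 with ha
  have hapos : 0 < a := by positivity
  have hspos : 0 < εs := lt_of_lt_of_le hapos h1
  have hmeas : AEMeasurable f (volume.restrict (Set.Ioc (0:ℝ) 1)) :=
    aemeasurable_restrict_of_monotoneOn measurableSet_Ioc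
      (hf_mono.mono Set.Ioc_subset_Icc_self)
  have hint : IntegrableOn (fun ε => f ε / ε) (Set.Ioc (0:ℝ) 1) := by
    refine Integrable.of_bound
      (hmeas.div aemeasurable_id).aestronglyMeasurable (n:ℝ) ?_
    filter_upwards [ae_restrict_mem measurableSet_Ioc] with x hx
    have hx' := Set.Ioc_subset_Icc_self hx
    rw [Real.norm_of_nonneg (div_nonneg (hf_mem x hx').1 hx.1.le), div_le_iff₀ hx.1]
    exact hf_le x hx'
  have hI : ∀ c d : ℝ, 0 ≤ c → c ≤ d → d ≤ 1 →
      IntervalIntegrable (fun ε => f ε / ε) volume c d := by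
    intro c d hc hcd hd
    rw [intervalIntegrable_iff_integrableOn_Ioc_of_le hcd]
    exact hint.mono_set (Set.Ioc_subset_Ioc hc hd)
  have ha1 : a ≤ 1 := h1.trans h2
  rw [← intervalIntegral.integral_of_le zero_le_one,
    ← intervalIntegral.integral_add_adjacent_intervals (hI 0 εs le_rfl hspos.le h2)
      (hI εs 1 hspos.le h2 le_rfl),
    ← intervalIntegral.integral_add_adjacent_intervals (hI 0 a le_rfl hapos.le ha1)
      (hI a εs hapos.le h1 h2)]
  have e1 : ∫ ε in (0:ℝ)..a, f ε / ε ≤ 1 / (n:ℝ) ^ 2 := by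
    have := intervalIntegral.integral_mono_on_of_le_Ioo (g := fun _ => (n:ℝ)) hapos.le
      (hI 0 a le_rfl hapos.le ha1) (by simp) (fun x hx => by
        rw [div_le_iff₀ hx.1]
        exact hf_le x ⟨hx.1.le, hx.2.le.trans ha1⟩)
    refine this.trans (le_of_eq ?_)
    rw [intervalIntegral.integral_const, ha, smul_eq_mul]
    field_simp
    try ring
  have e2 : ∫ ε in a..εs, f ε / ε ≤ 1 / (n:ℝ) ^ 6 := by
    have := intervalIntegral.integral_mono_on_of_le_Ioo (g := fun _ => 1 / (n:ℝ) ^ 6) h1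
      (hI a εs hapos.le h1 h2) (by simp) (fun x hx => by
        have hx0 : 0 < x := hapos.trans hx.1
        rw [div_le_iff₀ hx0]
        have hm := hf_mono ⟨hx0.le, hx.2.le.trans h2⟩ ⟨hspos.le, h2⟩ hx.2.le
        refine (hm.trans hfεs).trans ?_
        have e : 1 / (n:ℝ) ^ 9 = 1 / (n:ℝ) ^ 6 * a := by rw [ha]; field_simp
        rw [e]
        exact mul_le_mul_of_nonneg_left hx.1.le (by positivity))
    refine this.trans ?_
    rw [intervalIntegral.integral_const, smul_eq_mul]
    exact mul_le_of_le_one_left (by positivity) (by linarith)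
  have e3 : ∫ ε in εs..1, f ε / ε ≤ - Real.log εs := by
    have := intervalIntegral.integral_mono_on_of_le_Ioo (g := fun x => 1 / x) h2
      (hI εs 1 hspos.le h2 le_rfl)
      (intervalIntegral.intervalIntegrable_one_div
        (fun x hx => by
          rw [Set.uIcc_of_le h2] at hx
          exact (hspos.trans_le hx.1).ne') continuousOn_id)
      (fun x hx => by
        have hx0 : 0 < x := hspos.trans hx.1
        exact div_le_div_of_nonneg_right (hf_mem x ⟨hx0.le, hx.2.le⟩).2 hx0.le)
    refine this.trans (le_of_eq ?_)
    rw [integral_one_div_of_pos hspos one_pos, one_div, Real.log_inv]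
  linarith
end

section
/- Let μ ≥ 2 and let c₁ > 0 be a constant such that for every ε ∈ [0,1] and every integer m ≥ 0, 2^{−m} · #{ b ∈ {0,1}^m : Z^{(b)}(ε) ≤ 2^{−10m} } ≥ 1 − ε − c₁ 2^{−m/μ}. Fix R ∈ (0,1) and μ_s > 0, and set c = 2c₁/(1−R) + 2. Then there exists n₀ such that for every integer m with n = 2^m ≥ n₀ and nR ∈ ℕ, the following holds. Set ε* = 1 − R − c₁ n^{−1/μ}, and let I ⊆ {0,1}^m be a set of cardinality nR on which Z^{(b)}(ε*) attains its nR smallest values. Then every nondecreasing function P_e : [0,1] → [0,1] satisfying P_e(ε) ≤ 1 − (1−ε)^n for all ε ∈ [0,1] and P_e(ε*) ≤ Σ_{b∈I} Z^{(b)}(ε*) obeys 1/(nR) + (1/(μ_s n R)) ∫_0^1 (P_e(ε)/ε) dε ≤ 1/(nR) + (1/(μ_s n R)) ( −ln(1−R) + c· n^{−1/μ} ). -/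
open MeasureTheory

/-- One polarization step for the binary erasure channel. -/
def polarStep (b : Bool) (z : ℝ) : ℝ := if b then z ^ 2 else 2 * z - z ^ 2

/-- Erasure probability `Z^{(b)}(ε)` of the synthetic channel indexed by `b ∈ {0,1}^m`. -/
def polarZ (ε : ℝ) {m : ℕ} (b : Fin m → Bool) : ℝ :=
  (List.ofFn b).foldl (fun z bit => polarStep bit z) ε

theorem aux_integral (N δ a εs R c₁ : ℝ) (n : ℕ) (hnN : (n:ℝ) = N) (hN : 1 ≤ N)
    (hR : R ∈ Set.Ioo (0:ℝ) 1) (hc₁ : 0 < c₁) (hδ : 0 < δ) (hNδ : 1 / N ≤ δ)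
    (h1 : c₁ * δ ≤ (1 - R) / 2) (ha : a = 1 / N ^ 2) (haε : a ≤ εs)
    (hε : εs = 1 - R - c₁ * δ) (Pe : ℝ → ℝ) (hmono : MonotoneOn Pe (Set.Icc (0:ℝ) 1))
    (hPe : ∀ ε ∈ Set.Icc (0:ℝ) 1, Pe ε ∈ Set.Icc (0:ℝ) 1)
    (hb : ∀ ε ∈ Set.Icc (0:ℝ) 1, Pe ε ≤ 1 - (1 - ε) ^ n)
    (hs : Pe εs ≤ 1 / N ^ 9) :
    ∫ ε in Set.Ioc (0:ℝ) 1, Pe ε / ε ≤ -Real.log (1 - R) + (2 * c₁ / (1 - R) + 2) * δ := by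
  obtain ⟨hR0, hR1⟩ := hR
  have hRp : 0 < 1 - R := by linarith
  have hN0 : 0 < N := by linarith
  have ha0 : 0 < a := by rw [ha]; positivity
  have hcd : 0 < c₁ * δ := by positivity
  have hε0 : 0 < εs := by linarith
  have hε1 : εs ≤ 1 := by linarith
  have hlogR : Real.log (1 - R) ≤ 0 := Real.log_nonpos hRp.le (by linarith)
  have hcR : 0 < 2 * c₁ / (1 - R) := by positivity
  by_cases hint : IntegrableOn (fun ε => Pe ε / ε) (Set.Ioc (0:ℝ) 1) volume
  swap
  · rw [integral_undef hint]
    have : 0 < (2 * c₁ / (1 - R) + 2) * δ := by positivity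
    linarith
  have hii : ∀ x y : ℝ, 0 ≤ x → x ≤ y → y ≤ 1 →
      IntervalIntegrable (fun ε => Pe ε / ε) volume x y := by
    intro x y hx hxy hy
    rw [intervalIntegrable_iff_integrableOn_Ioc_of_le hxy]
    exact hint.mono_set (Set.Ioc_subset_Ioc hx hy)
  have e1 : ∫ ε in (0:ℝ)..a, Pe ε / ε ≤ ∫ ε in (0:ℝ)..a, N := by
    apply intervalIntegral.integral_mono_on_of_le_Ioo ha0.le
      (hii 0 a le_rfl ha0.le (by linarith)) (by simp)
    intro x hx
    have hx0 := hx.1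
    have hx1 := hx.2
    rw [div_le_iff₀ hx0]
    have h2 := hb x ⟨hx0.le, by linarith⟩
    have h3 := one_add_mul_le_pow (a := -x) (by linarith) n
    rw [hnN] at h3
    have : (1 + -x) ^ n = (1 - x) ^ n := by ring
    rw [this] at h3
    linarith
  have e2 : ∫ ε in a..εs, Pe ε / ε ≤ ∫ ε in a..εs, 1 / N ^ 7 := by
    apply intervalIntegral.integral_mono_on_of_le_Ioo haε
      (hii a εs ha0.le haε hε1) (by simp)
    intro x hx
    have hx1 := hx.1
    have hx2 := hx.2
    have hx0 : 0 < x := by linarith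
    rw [div_le_iff₀ hx0]
    have h2 := hmono (a := x) ⟨hx0.le, by linarith⟩ (b := εs) ⟨hε0.le, hε1⟩ hx2.le
    have h3 : 1 / N ^ 7 * a ≤ 1 / N ^ 7 * x := by gcongr
    have h4 : 1 / N ^ 7 * a = 1 / N ^ 9 := by rw [ha]; field_simp
    linarith
  have e3 : ∫ ε in εs..(1:ℝ), Pe ε / ε ≤ ∫ ε in εs..(1:ℝ), 1 / ε := by
    apply intervalIntegral.integral_mono_on_of_le_Ioo hε1
      (hii εs 1 hε0.le hε1 le_rfl)
    · apply intervalIntegral.intervalIntegrable_one_div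
      · intro x hx
        rw [Set.uIcc_of_le hε1] at hx
        linarith [hx.1]
      · fun_prop
    intro x hx
    have hx0 : 0 < x := lt_trans hε0 hx.1
    have := (hPe x ⟨hx0.le, hx.2.le⟩).2
    gcongr
  rw [integral_one_div_of_pos hε0 one_pos] at e3
  simp only [intervalIntegral.integral_const, smul_eq_mul] at e1 e2
  rw [← intervalIntegral.integral_of_le zero_le_one,
    ← intervalIntegral.integral_add_adjacent_intervals
      (hii 0 εs le_rfl hε0.le hε1) (hii εs 1 hε0.le hε1 le_rfl),
    ← intervalIntegral.integral_add_adjacent_intervals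
      (hii 0 a le_rfl ha0.le (by linarith)) (hii a εs ha0.le haε hε1)]
  have f1 : (a - 0) * N ≤ δ := by
    refine le_trans (le_of_eq ?_) hNδ
    rw [ha]; field_simp; ring
  have f2 : (εs - a) * (1 / N ^ 7) ≤ δ := by
    have : 1 / N ^ 7 ≤ 1 / N := by
      apply one_div_le_one_div_of_le hN0
      exact le_self_pow₀ hN (by norm_num)
    have h7 : 0 < 1 / N ^ 7 := by positivity
    nlinarith
  have f3 : Real.log (1 / εs) ≤ -Real.log (1 - R) + 2 * c₁ / (1 - R) * δ := by
    have hl := Real.log_le_sub_one_of_pos (x := (1 - R) / εs) (by positivity)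
    rw [Real.log_div hRp.ne' hε0.ne'] at hl
    rw [one_div, Real.log_inv]
    have : (1 - R) / εs - 1 ≤ 2 * c₁ / (1 - R) * δ := by
      rw [sub_le_iff_le_add, div_le_iff₀ hε0]
      have : 2 * c₁ / (1 - R) * δ * (1 - R) = 2 * (c₁ * δ) := by field_simp
      have h5 : 0 ≤ 2 * c₁ / (1 - R) * δ := by positivity
      have h6 : 2 * c₁ / (1 - R) * δ * ((1 - R) / 2) ≤ 2 * c₁ / (1 - R) * δ * εs := by
        apply mul_le_mul_of_nonneg_left _ h5
        linarith
      linarith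
    linarith
  linarith

/-- **Theorem 1 of the paper.** Suppose `μ ≥ 2` and `c₁ > 0` are such
that for every `ε ∈ [0,1]` and `m ≥ 0` the fraction of synthetic channels with
`Z^{(b)}(ε) ≤ 2^{−10m}` is at least `1 − ε − c₁ 2^{−m/μ}`. Fix `R ∈ (0,1)`, `μ_s > 0`,
and set `c = 2c₁/(1−R) + 2`. Then for all large enough `n = 2^m` with `nR ∈ ℕ`, taking
`ε* = 1 − R − c₁ n^{−1/μ}` and `I` a set of `nR` indices realizing the `nR` smallest
values of `Z^{(b)}(ε*)`, every block error probability `P_e` (nondecreasing, within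
`[0,1]`, bounded by `1 − (1−ε)^n`, and with `P_e(ε*) ≤ Σ_{b∈I} Z^{(b)}(ε*)`) satisfies
the claimed bound on the average execution time. -/
theorem average_execution_time_polar (μ c₁ R μs : ℝ) (hμ : 2 ≤ μ) (hc₁ : 0 < c₁)
    (hR : R ∈ Set.Ioo (0:ℝ) 1) (hμs : 0 < μs)
    (hfrac : ∀ ε ∈ Set.Icc (0:ℝ) 1, ∀ m : ℕ,
      (((Finset.univ.filter (fun b : Fin m → Bool =>
          polarZ ε b ≤ (2:ℝ) ^ (-(10 * (m:ℝ))))).card : ℝ) / 2 ^ m) ≥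
        1 - ε - c₁ * (2:ℝ) ^ (-((m:ℝ) / μ))) :
    ∃ n₀ : ℕ, ∀ m k : ℕ, n₀ ≤ 2 ^ m → (k:ℝ) = (2:ℝ) ^ m * R →
      ∀ εs : ℝ, εs = 1 - R - c₁ * ((2:ℝ) ^ m) ^ (-(1 / μ)) →
      ∀ I : Finset (Fin m → Bool), I.card = k →
        (∀ b ∈ I, ∀ b' ∉ I, polarZ εs b ≤ polarZ εs b') →
      ∀ Pe : ℝ → ℝ, MonotoneOn Pe (Set.Icc (0:ℝ) 1) →
        (∀ ε ∈ Set.Icc (0:ℝ) 1, Pe ε ∈ Set.Icc (0:ℝ) 1) →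
        (∀ ε ∈ Set.Icc (0:ℝ) 1, Pe ε ≤ 1 - (1 - ε) ^ (2 ^ m)) →
        Pe εs ≤ ∑ b ∈ I, polarZ εs b →
        1 / ((2:ℝ) ^ m * R) +
            (1 / (μs * (2:ℝ) ^ m * R)) * ∫ ε in Set.Ioc (0:ℝ) 1, Pe ε / ε ≤
          1 / ((2:ℝ) ^ m * R) + (1 / (μs * (2:ℝ) ^ m * R)) *
            (-Real.log (1 - R) +
              (2 * c₁ / (1 - R) + 2) * ((2:ℝ) ^ m) ^ (-(1 / μ))) := by
  have hμ0 : 0 < μ := by linarith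
  have hRp : 0 < 1 - R := by linarith [hR.2]
  have ht : Filter.Tendsto (fun n : ℕ => (n:ℝ) ^ (-(1 / μ))) Filter.atTop (nhds 0) :=
    (tendsto_rpow_neg_atTop (by positivity)).comp tendsto_natCast_atTop_atTop
  have hev := (ht.eventually_lt_const (u := (1 - R) / 2) (by positivity)).and
    (ht.eventually_lt_const (u := (1 - R) / 2 / c₁) (by positivity))
  obtain ⟨n₀, hn₀⟩ := Filter.eventually_atTop.1 hev
  refine ⟨n₀, ?_⟩
  intro m k hm hk εs hεs I hI hmin Pe hmono hPe hb hs
  obtain ⟨g1, g2⟩ := hn₀ _ hm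
  push_cast at g1 g2
  have hN : (1:ℝ) ≤ 2 ^ m := one_le_pow₀ (by norm_num)
  have hδe : (2:ℝ) ^ (-((m:ℝ) / μ)) = ((2:ℝ) ^ m) ^ (-(1 / μ)) := by
    rw [← Real.rpow_natCast, ← Real.rpow_mul (by norm_num)]
    congr 1
    ring
  have hte : (2:ℝ) ^ (-(10 * (m:ℝ))) = 1 / ((2:ℝ) ^ m) ^ 10 := by
    rw [Real.rpow_neg (by norm_num), one_div, ← pow_mul, ← Real.rpow_natCast]
    congr 2
    push_cast
    ring
  have hδ1 : 1 / (2:ℝ) ^ m ≤ ((2:ℝ) ^ m) ^ (-(1 / μ)) := by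
    rw [one_div, ← Real.rpow_neg_one]
    apply Real.rpow_le_rpow_of_exponent_le hN
    rw [neg_le_neg_iff, div_le_one hμ0]
    linarith
  have hδ : 0 < ((2:ℝ) ^ m) ^ (-(1 / μ)) := by positivity
  generalize hδd : ((2:ℝ) ^ m) ^ (-(1 / μ)) = δ at *
  have g3 : c₁ * δ ≤ (1 - R) / 2 := by
    rw [lt_div_iff₀ hc₁] at g2
    linarith
  have hcd : 0 < c₁ * δ := by positivity
  have hε01 : εs ∈ Set.Icc (0:ℝ) 1 := ⟨by linarith, by linarith [hR.1]⟩
  have hf := hfrac εs hε01 m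
  rw [hδe, hte, ge_iff_le, le_div_iff₀ (by positivity)] at hf
  have hcard : k ≤ (Finset.univ.filter (fun b : Fin m → Bool =>
          polarZ εs b ≤ 1 / ((2:ℝ) ^ m) ^ 10)).card := by
    have : (k:ℝ) ≤ ((Finset.univ.filter (fun b : Fin m → Bool =>
          polarZ εs b ≤ 1 / ((2:ℝ) ^ m) ^ 10)).card : ℝ) := by
      refine le_trans (le_of_eq ?_) hf
      rw [hk, hεs]; ring
    exact_mod_cast this
  have hI2 : ∀ b ∈ I, polarZ εs b ≤ 1 / ((2:ℝ) ^ m) ^ 10 := by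
    intro b hbI
    by_contra hcon
    have hss : (Finset.univ.filter (fun b : Fin m → Bool =>
          polarZ εs b ≤ 1 / ((2:ℝ) ^ m) ^ 10)) ⊂ I := by
      rw [Finset.ssubset_iff_of_subset]
      · exact ⟨b, hbI, by simpa using hcon⟩
      · intro b' hb'
        by_contra hb'I
        exact hcon ((hmin b hbI b' hb'I).trans (Finset.mem_filter.1 hb').2)
    have := Finset.card_lt_card hss
    omega
  have hsum : Pe εs ≤ 1 / ((2:ℝ) ^ m) ^ 9 := by
    refine hs.trans ((Finset.sum_le_card_nsmul I _ _ hI2).trans ?_)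
    rw [nsmul_eq_mul, hI, hk]
    have : 1 / ((2:ℝ) ^ m) ^ 9 = (2:ℝ) ^ m * 1 * (1 / ((2:ℝ) ^ m) ^ 10) := by
      field_simp
    rw [this]
    gcongr
    exact hR.2.le
  have haε : 1 / ((2:ℝ) ^ m) ^ 2 ≤ εs := by
    have : 1 / ((2:ℝ) ^ m) ^ 2 ≤ 1 / (2:ℝ) ^ m :=
      one_div_le_one_div_of_le (by positivity) (le_self_pow₀ hN (by norm_num))
    linarith
  have key := aux_integral ((2:ℝ) ^ m) δ _ εs R c₁ (2 ^ m) (by push_cast; rfl) hN hR hc₁ hδ hδ1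
    g3 rfl haε hεs Pe hmono hPe hb hsum
  have hR0 := hR.1
  gcongr
end

section
/- Under the hypotheses of the main theorem (μ ≥ 2, c₁ > 0 with 2^{−m}·#{b ∈ {0,1}^m : Z^{(b)}(ε) ≤ 2^{−10m}} ≥ 1 − ε − c₁2^{−m/μ} for all ε ∈ [0,1] and m ≥ 0, R ∈ (0,1), μ_s > 0, c = 2c₁/(1−R) + 2, and c' = c/(μ_s R) + 1/(μ_s R(1−R))), there exists n₀ such that for every integer m with n = 2^m ≥ n₀, nR ∈ ℕ and n(1−R) ≥ 1, the following holds. Set ε* = 1 − R − c₁ n^{−1/μ} and let I ⊆ {0,1}^m be a set of cardinality nR on which Z^{(b)}(ε*) attains its nR smallest values. Let P_e : [0,1] → [0,1] be any nondecreasing function with P_e(ε) ≤ 1 − (1−ε)^n for all ε and P_e(ε*) ≤ Σ_{b∈I} Z^{(b)}(ε*), and define T_polar = 1/(nR) + (1/(μ_s n R)) ∫_0^1 (P_e(ε)/ε) dε and T_MDS = 1/(nR) + (1/(μ_s n R)) Σ_{i=n(1−R)+1}^{n} 1/i. Then n·T_polar − n·T_MDS ≤ c' · n^{−1/μ}. 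-/
open MeasureTheory

lemma aux_sum (n j : ℕ) (hj : 1 ≤ j) (hjn : j ≤ n) :
    Real.log ((n:ℝ) + 1) - Real.log ((j:ℝ) + 1) ≤ ∑ i ∈ Finset.Ioc j n, (1:ℝ) / i := by
  induction n, hjn using Nat.le_induction with
  | base => simp
  | succ n hn ih =>
    rw [Finset.sum_Ioc_succ_top (by omega)]
    have h1 : Real.log (((n + 1 : ℕ) : ℝ) + 1) - Real.log ((n:ℝ) + 1) ≤ 1 / ((n + 1 : ℕ) : ℝ) := by
      rw [← Real.log_div (by positivity) (by positivity)]
      refine (Real.log_le_sub_one_of_pos (by positivity)).trans (le_of_eq ?_)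
      push_cast
      field_simp
      ring
    linarith

lemma aux_card {α : Type*} [Fintype α] [DecidableEq α] (Z : α → ℝ) (t : ℝ) (I : Finset α)
    (hI : ∀ b ∈ I, ∀ b' ∉ I, Z b ≤ Z b')
    (hc : I.card ≤ (Finset.univ.filter (fun b => Z b ≤ t)).card) :
    ∀ b ∈ I, Z b ≤ t := by
  intro b hb
  by_contra hlt
  have hsub : Finset.univ.filter (fun b => Z b ≤ t) ⊆ I.erase b := by
    intro b' hb'
    simp only [Finset.mem_filter, Finset.mem_univ, true_and] at hb'
    rw [Finset.mem_erase]
    refine ⟨?_, ?_⟩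
    · rintro rfl
      exact hlt hb'
    · by_contra hn
      exact hlt ((hI b hb b' hn).trans hb')
  have h1 := Finset.card_le_card hsub
  have h2 := Finset.card_erase_lt_of_mem hb
  omega

lemma aux_int (N e : ℝ) (k : ℕ) (hkN : (k:ℝ) = N) (hN : 1 ≤ N) (he0 : 0 < e) (he1 : e ≤ 1)
    (Pe : ℝ → ℝ)
    (hmono : MonotoneOn Pe (Set.Icc (0:ℝ) 1))
    (h01 : ∀ ε ∈ Set.Icc (0:ℝ) 1, Pe ε ∈ Set.Icc (0:ℝ) 1)
    (hB : ∀ ε ∈ Set.Icc (0:ℝ) 1, Pe ε ≤ 1 - (1 - ε) ^ k)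
    (hPe : Pe e ≤ 1 / N ^ 9) :
    ∫ ε in Set.Ioc (0:ℝ) 1, Pe ε / ε ≤ 2 / N - Real.log e := by
  have hN0 : 0 < N := by linarith
  have hN2 : 1 / N ^ 2 ≤ 1 := by
    rw [div_le_one (by positivity)]
    exact one_le_pow₀ hN
  set g1 : ℝ → ℝ := (Set.Ioc (0:ℝ) (1 / N ^ 2)).indicator (fun _ => N) with hg1
  set g2 : ℝ → ℝ := fun _ => 1 / N with hg2
  set g3 : ℝ → ℝ := (Set.Ioc e 1).indicator (fun ε => ε⁻¹) with hg3
  have hinv : IntegrableOn (fun ε : ℝ => ε⁻¹) (Set.Ioc e 1) := by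
    have : IntervalIntegrable (fun ε : ℝ => ε⁻¹) volume e 1 := by
      apply intervalIntegral.intervalIntegrable_inv
      · intro x hx
        rw [Set.uIcc_of_le he1] at hx
        have := hx.1
        linarith
      · exact continuousOn_id
    exact (intervalIntegrable_iff_integrableOn_Ioc_of_le he1).1 this
  have hi1 : IntegrableOn g1 (Set.Ioc (0:ℝ) 1) := by
    apply Integrable.integrableOn
    rw [hg1, integrable_indicator_iff measurableSet_Ioc]
    exact integrableOn_const (by simp)
  have hi2 : IntegrableOn g2 (Set.Ioc (0:ℝ) 1) := integrableOn_const (by simp)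
  have hi3 : IntegrableOn g3 (Set.Ioc (0:ℝ) 1) := by
    apply Integrable.integrableOn
    rw [hg3, integrable_indicator_iff measurableSet_Ioc]
    exact hinv
  have e1 : ∫ ε in Set.Ioc (0:ℝ) 1, g1 ε = 1 / N := by
    rw [hg1, setIntegral_indicator measurableSet_Ioc, Set.inter_eq_self_of_subset_right
      (Set.Ioc_subset_Ioc_right hN2)]
    simp
    rw [max_eq_left (by positivity)]
    field_simp
  have e2 : ∫ ε in Set.Ioc (0:ℝ) 1, g2 ε = 1 / N := by
    simp [hg2]
  have e3 : ∫ ε in Set.Ioc (0:ℝ) 1, g3 ε = - Real.log e := by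
    rw [hg3, setIntegral_indicator measurableSet_Ioc, Set.inter_eq_self_of_subset_right
      (Set.Ioc_subset_Ioc_left he0.le), ← intervalIntegral.integral_of_le he1,
      integral_inv_of_pos he0 one_pos]
    simp
  have hmain : ∫ ε in Set.Ioc (0:ℝ) 1, Pe ε / ε ≤
      ∫ ε in Set.Ioc (0:ℝ) 1, ((g1 ε + g2 ε) + g3 ε) := by
    apply integral_mono_of_nonneg
    · refine (ae_restrict_iff' measurableSet_Ioc).2 (Filter.Eventually.of_forall ?_)
      intro x hx
      exact div_nonneg (h01 x ⟨hx.1.le, hx.2⟩).1 hx.1.le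
    · exact (hi1.add hi2).add hi3
    · refine (ae_restrict_iff' measurableSet_Ioc).2 (Filter.Eventually.of_forall ?_)
      intro x hx
      have hx0 := hx.1
      have hxI : x ∈ Set.Icc (0:ℝ) 1 := ⟨hx.1.le, hx.2⟩
      have n1 : 0 ≤ g1 x := Set.indicator_nonneg (fun _ _ => hN0.le) x
      have n2 : 0 ≤ g2 x := by simp only [hg2]; positivity
      have n3 : 0 ≤ g3 x := Set.indicator_nonneg
        (fun y hy => inv_nonneg.2 (he0.le.trans hy.1.le)) x
      show Pe x / x ≤ g1 x + g2 x + g3 x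
      rcases le_or_gt x (1 / N ^ 2) with h | h
      · have : g1 x = N := by
          rw [hg1]
          exact Set.indicator_of_mem (show x ∈ Set.Ioc (0:ℝ) (1 / N ^ 2) from ⟨hx0, h⟩) _
        have hb : Pe x / x ≤ N := by
          rw [div_le_iff₀ hx0]
          have h1 := hB x hxI
          have h2 := one_add_mul_le_pow (a := -x) (by linarith [hx.2]) k
          rw [hkN] at h2
          have h3 : (1 + -x) = 1 - x := by ring
          rw [h3] at h2
          linarith
        linarith
      rcases le_or_gt x e with h' | h'
      · have hb : Pe x / x ≤ 1 / N := by
          rw [div_le_iff₀ hx0]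
          have h1 := hmono hxI ⟨he0.le, he1⟩ h'
          have h2 : 1 / N ^ 9 ≤ 1 / N * (1 / N ^ 2) := by
            rw [one_div_mul_one_div]
            apply one_div_le_one_div_of_le (by positivity)
            calc N * N ^ 2 = N ^ 3 := by ring
              _ ≤ N ^ 9 := pow_le_pow_right₀ hN (by norm_num)
          have h3 : 1 / N * (1 / N ^ 2) ≤ 1 / N * x := by gcongr
          linarith
        have : g2 x = 1 / N := rfl
        linarith
      · have : g3 x = x⁻¹ := by
          rw [hg3]
          exact Set.indicator_of_mem (show x ∈ Set.Ioc e 1 from ⟨h', hx.2⟩) _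
        have hb : Pe x / x ≤ x⁻¹ := by
          rw [div_eq_mul_inv]
          exact mul_le_of_le_one_left (by positivity) (h01 x hxI).2
        linarith
  have hsum : ∫ ε in Set.Ioc (0:ℝ) 1, ((g1 ε + g2 ε) + g3 ε) = 2 / N - Real.log e := by
    have a1 : ∫ ε in Set.Ioc (0:ℝ) 1, ((g1 ε + g2 ε) + g3 ε) =
        (∫ ε in Set.Ioc (0:ℝ) 1, (g1 ε + g2 ε)) + ∫ ε in Set.Ioc (0:ℝ) 1, g3 ε :=
      integral_add (hi1.add hi2) hi3
    have a2 : ∫ ε in Set.Ioc (0:ℝ) 1, (g1 ε + g2 ε) =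
        (∫ ε in Set.Ioc (0:ℝ) 1, g1 ε) + ∫ ε in Set.Ioc (0:ℝ) 1, g2 ε :=
      integral_add hi1 hi2
    rw [a1, a2, e1, e2, e3]
    ring
  linarith

/-- **Corollary 1 of the paper.** Under the hypotheses of the main
theorem, with `c = 2c₁/(1−R) + 2` and `c' = c/(μ_s R) + 1/(μ_s R(1−R))`, for all large
enough `n = 2^m` with `nR ∈ ℕ` and `n(1−R) = j ≥ 1` an integer: with
`ε* = 1 − R − c₁ n^{−1/μ}`, `I` the set of `nR` smallest values of `Z^{(b)}(ε*)`, and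
`P_e` any admissible block error probability, the normalized gap between the average
execution time of the polar code and of the MDS code is at most `c' n^{−1/μ}`. -/
theorem gap_to_optimum_polar (μ c₁ R μs : ℝ) (hμ : 2 ≤ μ) (hc₁ : 0 < c₁)
    (hR : R ∈ Set.Ioo (0:ℝ) 1) (hμs : 0 < μs)
    (hfrac : ∀ ε ∈ Set.Icc (0:ℝ) 1, ∀ m : ℕ,
      (((Finset.univ.filter (fun b : Fin m → Bool =>
          polarZ ε b ≤ (2:ℝ) ^ (-(10 * (m:ℝ))))).card : ℝ) / 2 ^ m) ≥
        1 - ε - c₁ * (2:ℝ) ^ (-((m:ℝ) / μ))) :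
    ∃ n₀ : ℕ, ∀ m k j : ℕ, n₀ ≤ 2 ^ m → (k:ℝ) = (2:ℝ) ^ m * R →
      1 ≤ j → (j:ℝ) = (2:ℝ) ^ m * (1 - R) →
      ∀ εs : ℝ, εs = 1 - R - c₁ * ((2:ℝ) ^ m) ^ (-(1 / μ)) →
      ∀ I : Finset (Fin m → Bool), I.card = k →
        (∀ b ∈ I, ∀ b' ∉ I, polarZ εs b ≤ polarZ εs b') →
      ∀ Pe : ℝ → ℝ, MonotoneOn Pe (Set.Icc (0:ℝ) 1) →
        (∀ ε ∈ Set.Icc (0:ℝ) 1, Pe ε ∈ Set.Icc (0:ℝ) 1) →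
        (∀ ε ∈ Set.Icc (0:ℝ) 1, Pe ε ≤ 1 - (1 - ε) ^ (2 ^ m)) →
        Pe εs ≤ ∑ b ∈ I, polarZ εs b →
        (2:ℝ) ^ m * (1 / ((2:ℝ) ^ m * R) +
            (1 / (μs * (2:ℝ) ^ m * R)) * ∫ ε in Set.Ioc (0:ℝ) 1, Pe ε / ε) -
          (2:ℝ) ^ m * (1 / ((2:ℝ) ^ m * R) +
            (1 / (μs * (2:ℝ) ^ m * R)) * ∑ i ∈ Finset.Ioc j (2 ^ m), (1:ℝ) / i) ≤
        ((2 * c₁ / (1 - R) + 2) / (μs * R) + 1 / (μs * R * (1 - R))) *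
          ((2:ℝ) ^ m) ^ (-(1 / μ)) := by
  obtain ⟨hR0, hR1⟩ := hR
  have hq : 0 < 1 - R := by linarith
  have hμ0 : 0 < μ := by linarith
  have hlim : Filter.Tendsto (fun n : ℕ => ((n:ℝ)) ^ (-(1 / μ))) Filter.atTop (nhds 0) :=
    (tendsto_rpow_neg_atTop (show 0 < 1 / μ by positivity)).comp tendsto_natCast_atTop_atTop
  have hev := hlim.eventually (gt_mem_nhds (show (0:ℝ) < (1 - R) / (2 * c₁) by positivity))
  obtain ⟨n₀, hn₀⟩ := Filter.eventually_atTop.1 hev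
  refine ⟨n₀, ?_⟩
  intro m k j hm hk hj1 hj εs hεs I hIc hI Pe hmono h01 hB hPe
  have hx := hn₀ _ hm
  push_cast at hx
  have hxm : (2:ℝ) ^ (-((m:ℝ) / μ)) = ((2:ℝ) ^ m) ^ (-(1 / μ)) := by
    rw [← Real.rpow_natCast, ← Real.rpow_mul (by norm_num)]
    congr 1
    ring
  have hN1 : (1:ℝ) ≤ (2:ℝ) ^ m := one_le_pow₀ (by norm_num)
  have hxN : 1 / (2:ℝ) ^ m ≤ ((2:ℝ) ^ m) ^ (-(1 / μ)) := by
    have h := Real.rpow_le_rpow_of_exponent_le hN1 (show (-1:ℝ) ≤ -(1 / μ) by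
      have : 1 / μ ≤ 1 := by rw [div_le_one hμ0]; linarith
      linarith)
    rwa [Real.rpow_neg_one, ← one_div] at h
  have hx0 : 0 < ((2:ℝ) ^ m) ^ (-(1 / μ)) := by positivity
  have hfr := fun h => hfrac εs h m
  rw [hxm] at hfr
  have ht : (2:ℝ) ^ (-(10 * (m:ℝ))) = 1 / ((2:ℝ) ^ m) ^ 10 := by
    rw [Real.rpow_neg (by norm_num), one_div, ← pow_mul, ← Real.rpow_natCast]
    push_cast
    rw [mul_comm]
  have hNcast : ((2 ^ m : ℕ) : ℝ) = (2:ℝ) ^ m := by push_cast; rfl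
  have hsum := aux_sum (2 ^ m) j hj1 (by
    have : (j:ℝ) ≤ ((2 ^ m : ℕ) : ℝ) := by
      rw [hNcast, hj]
      nlinarith
    exact_mod_cast this)
  rw [hNcast] at hsum
  generalize ((2:ℝ) ^ m) ^ (-(1 / μ)) = x at *
  have hcx : c₁ * x < (1 - R) / 2 := by
    rw [lt_div_iff₀ (by positivity)] at hx
    linarith
  have hcx0 : 0 < c₁ * x := by positivity
  have he0 : 0 < εs := by linarith
  have he1 : εs ≤ 1 := by linarith
  have hfr := hfr ⟨he0.le, he1⟩
  have hZ : ∀ b ∈ I, polarZ εs b ≤ (2:ℝ) ^ (-(10 * (m:ℝ))) := by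
    apply aux_card _ _ _ hI
    rw [ge_iff_le, le_div_iff₀ (by positivity)] at hfr
    have : (I.card : ℝ) ≤ ((Finset.univ.filter (fun b : Fin m → Bool =>
          polarZ εs b ≤ (2:ℝ) ^ (-(10 * (m:ℝ))))).card : ℝ) := by
      refine le_trans (le_of_eq ?_) hfr
      rw [hIc, hk, hεs]
      ring
    exact_mod_cast this
  have hPe9 : Pe εs ≤ 1 / ((2:ℝ) ^ m) ^ 9 := by
    refine hPe.trans ((Finset.sum_le_card_nsmul _ _ _ hZ).trans ?_)
    rw [nsmul_eq_mul, hIc, hk, ht]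
    generalize (2:ℝ) ^ m = N at *
    have hN0 : 0 < N := by linarith
    have : N * R * (1 / N ^ 10) = R * (1 / N ^ 9) := by field_simp
    rw [this]
    exact mul_le_of_le_one_left (by positivity) hR1.le
  have hint := aux_int ((2:ℝ) ^ m) εs (2 ^ m) hNcast hN1 he0 he1 Pe hmono h01 hB hPe9
  generalize (∫ ε in Set.Ioc (0:ℝ) 1, Pe ε / ε) = J at *
  generalize (∑ i ∈ Finset.Ioc j (2 ^ m), (1:ℝ) / i) = S at *
  generalize (2:ℝ) ^ m = N at *
  have hN0 : 0 < N := by linarith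
  have hj0 : (0:ℝ) < j := by exact_mod_cast hj1
  -- log of the threshold
  have hlog1 : Real.log (1 - R) - 2 * c₁ / (1 - R) * x ≤ Real.log εs := by
    have h1 : Real.log ((1 - R) / εs) ≤ (1 - R) / εs - 1 :=
      Real.log_le_sub_one_of_pos (by positivity)
    rw [Real.log_div hq.ne' he0.ne'] at h1
    have h2 : (1 - R) / εs - 1 ≤ 2 * c₁ / (1 - R) * x := by
      have : (1 - R) / εs - 1 = (c₁ * x) / εs := by
        rw [eq_div_iff he0.ne', sub_mul, div_mul_cancel₀ _ he0.ne', hεs]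
        ring
      rw [this]
      have h3 : 2 * c₁ / (1 - R) * x = (c₁ * x) / ((1 - R) / 2) := by field_simp
      rw [h3]
      apply div_le_div_of_nonneg_left hcx0.le (by positivity)
      linarith
    linarith
  have hlog2 : - Real.log (1 - R) - 1 / (1 - R) * x ≤ S := by
    have h1 : Real.log N ≤ Real.log (N + 1) := Real.log_le_log hN0 (by linarith)
    have h2 : Real.log (((j:ℝ) + 1) / j) ≤ ((j:ℝ) + 1) / j - 1 :=
      Real.log_le_sub_one_of_pos (by positivity)
    rw [Real.log_div (by positivity) hj0.ne'] at h2
    have h3 : ((j:ℝ) + 1) / j - 1 = 1 / (1 - R) * (1 / N) := by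
      rw [hj]
      field_simp
      ring
    have h4 : 1 / (1 - R) * (1 / N) ≤ 1 / (1 - R) * x := by gcongr
    have h5 : Real.log (j:ℝ) = Real.log N + Real.log (1 - R) := by
      rw [hj, Real.log_mul hN0.ne' hq.ne']
    linarith
  have hJS : J - S ≤ (2 * c₁ / (1 - R) + 2 + 1 / (1 - R)) * x := by
    have : 2 / N = 2 * (1 / N) := by ring
    linarith
  have hL : N * (1 / (N * R) + 1 / (μs * N * R) * J) - N * (1 / (N * R) + 1 / (μs * N * R) * S)
      = (1 / (μs * R)) * (J - S) := by
    field_simp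
    ring
  have hRr : ((2 * c₁ / (1 - R) + 2) / (μs * R) + 1 / (μs * R * (1 - R))) * x
      = (1 / (μs * R)) * ((2 * c₁ / (1 - R) + 2 + 1 / (1 - R)) * x) := by
    field_simp
  rw [hL, hRr]
  exact mul_le_mul_of_nonneg_left hJS (by positivity)
end

section
/- Let γ ∈ (0,1], R ∈ (0,1), c₂ > 0, and μ_s > 0. Then there exist a constant c̃ > 0 and n₀ such that for every integer n ≥ n₀ with nR ∈ ℕ, the following holds. Set ε* = 1 − R − c₂ n^{−γ}. Then every nondecreasing function P_e : [0,1] → [0,1] satisfying P_e(ε) ≤ 1 − (1−ε)^n for all ε ∈ [0,1] and P_e(ε*) ≤ n^{−9} obeys 1/(nR) + (1/(μ_s n R)) ∫_0^1 (P_e(ε)/ε) dε ≤ 1/(nR) + (1/(μ_s n R)) ( −ln(1−R) + c̃ · n^{−γ} ). -/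
open MeasureTheory

/-- **analytic core of Theorem 2 of the paper.** Let `γ ∈ (0,1]`,
`R ∈ (0,1)`, `c₂ > 0`, `μ_s > 0`. Then there are `c̃ > 0` and `n₀` such that for every
`n ≥ n₀` with `nR ∈ ℕ`, setting `ε* = 1 − R − c₂ n^{−γ}`, every nondecreasing
`P_e : [0,1] → [0,1]` with `P_e(ε) ≤ 1 − (1−ε)^n` and `P_e(ε*) ≤ n^{−9}` satisfies
the claimed bound on the average execution time. -/
theorem average_execution_time_large_kernels (γ R c₂ μs : ℝ)
    (hγ : γ ∈ Set.Ioc (0:ℝ) 1) (hR : R ∈ Set.Ioo (0:ℝ) 1)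
    (hc₂ : 0 < c₂) (hμs : 0 < μs) :
    ∃ c : ℝ, 0 < c ∧ ∃ n₀ : ℕ, ∀ n : ℕ, n₀ ≤ n → (∃ k : ℕ, (k:ℝ) = (n:ℝ) * R) →
      ∀ εs : ℝ, εs = 1 - R - c₂ * (n:ℝ) ^ (-γ) →
      ∀ Pe : ℝ → ℝ, MonotoneOn Pe (Set.Icc (0:ℝ) 1) →
        (∀ ε ∈ Set.Icc (0:ℝ) 1, Pe ε ∈ Set.Icc (0:ℝ) 1) →
        (∀ ε ∈ Set.Icc (0:ℝ) 1, Pe ε ≤ 1 - (1 - ε) ^ n) →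
        Pe εs ≤ (n:ℝ) ^ (-(9:ℝ)) →
        1 / ((n:ℝ) * R) +
            (1 / (μs * (n:ℝ) * R)) * ∫ ε in Set.Ioc (0:ℝ) 1, Pe ε / ε ≤
          1 / ((n:ℝ) * R) + (1 / (μs * (n:ℝ) * R)) *
            (-Real.log (1 - R) + c * (n:ℝ) ^ (-γ)) := by
  obtain ⟨hγ0, hγ1⟩ := hγ
  obtain ⟨hR0, hR1⟩ := hR
  have ha : 0 < 1 - R := by linarith
  refine ⟨2 + 2 * c₂ / (1 - R), by positivity, ?_⟩
  have ht : Filter.Tendsto (fun n : ℕ => c₂ * (n:ℝ) ^ (-γ)) Filter.atTop (nhds 0) := by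
    have h1 := ((tendsto_rpow_neg_atTop hγ0).comp tendsto_natCast_atTop_atTop).const_mul c₂
    simpa using h1
  have hev := (ht.eventually (ge_mem_nhds (show (0:ℝ) < (1 - R) / 2 by linarith))).and
    (Filter.eventually_ge_atTop 1)
  obtain ⟨n₀, hn₀⟩ := Filter.eventually_atTop.1 hev
  refine ⟨n₀, fun n hn _ εs hεs Pe hmono hP01 hPn hPs => ?_⟩
  obtain ⟨hx, hn1⟩ := hn₀ n hn
  have hn1' : (1:ℝ) ≤ n := by exact_mod_cast hn1
  have hn0 : (0:ℝ) < n := by linarith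
  have hxpos : 0 < c₂ * (n:ℝ) ^ (-γ) := by positivity
  have hεlo : (1 - R) / 2 ≤ εs := by linarith
  have hε0 : 0 < εs := by linarith
  have hε1 : εs ≤ 1 := by linarith
  have hinv : (n:ℝ)⁻¹ ≤ (n:ℝ) ^ (-γ) := by
    rw [← Real.rpow_neg_one]
    exact Real.rpow_le_rpow_of_exponent_le hn1' (by linarith)
  have hlog : -Real.log εs ≤ -Real.log (1 - R) + 2 * c₂ / (1 - R) * (n:ℝ) ^ (-γ) := by
    have h1 := Real.one_sub_inv_le_log_of_pos (show 0 < εs / (1 - R) by positivity)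
    rw [Real.log_div hε0.ne' ha.ne', inv_div] at h1
    have h2 : (1 - R) / εs - 1 ≤ 2 * c₂ / (1 - R) * (n:ℝ) ^ (-γ) := by
      have h3 : (1 - R) / εs - 1 = (c₂ * (n:ℝ) ^ (-γ)) / εs := by
        rw [eq_div_iff hε0.ne', sub_mul, div_mul_cancel₀ _ hε0.ne']; linarith
      rw [h3]
      calc (c₂ * (n:ℝ) ^ (-γ)) / εs ≤ (c₂ * (n:ℝ) ^ (-γ)) / ((1 - R) / 2) := by gcongr
        _ = _ := by field_simp
    linarith
  have hd1 : ((n:ℝ) ^ 2)⁻¹ ≤ 1 := inv_le_one_of_one_le₀ (one_le_pow₀ hn1')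
  have hd0 : 0 < ((n:ℝ) ^ 2)⁻¹ := by positivity
  have key : ∫ ε in Set.Ioc (0:ℝ) 1, Pe ε / ε ≤ 2 * (n:ℝ)⁻¹ + -Real.log εs := by
    have hi1 : IntegrableOn ((Set.Ioc (0:ℝ) ((n:ℝ) ^ 2)⁻¹).indicator fun _ => (n:ℝ))
        (Set.Ioc (0:ℝ) 1) :=
      (integrableOn_const (by simp)).indicator measurableSet_Ioc
    have hi2 : IntegrableOn (fun _ => (n:ℝ)⁻¹) (Set.Ioc (0:ℝ) 1) :=
      integrableOn_const (by simp)
    have hii : IntervalIntegrable (fun x : ℝ => x⁻¹) volume εs 1 := by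
      apply intervalIntegral.intervalIntegrable_inv
      · intro x hx
        rw [Set.uIcc_of_le hε1] at hx
        exact (lt_of_lt_of_le hε0 hx.1).ne'
      · exact continuousOn_id
    have hsub : Set.Ioc (0:ℝ) 1 ∩ Set.Ioc εs 1 = Set.Ioc εs 1 :=
      Set.inter_eq_right.2 (Set.Ioc_subset_Ioc_left hε0.le)
    have hsub' : Set.Ioc (0:ℝ) 1 ∩ Set.Ioc (0:ℝ) ((n:ℝ) ^ 2)⁻¹ = Set.Ioc (0:ℝ) ((n:ℝ) ^ 2)⁻¹ :=
      Set.inter_eq_right.2 (Set.Ioc_subset_Ioc_right hd1)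
    have hi3 : IntegrableOn ((Set.Ioc εs 1).indicator fun x : ℝ => x⁻¹) (Set.Ioc (0:ℝ) 1) := by
      have := (integrable_indicator_iff (measurableSet_Ioc)).2 hii.1
      exact this.integrableOn
    calc ∫ ε in Set.Ioc (0:ℝ) 1, Pe ε / ε
        ≤ ∫ ε in Set.Ioc (0:ℝ) 1,
          (((Set.Ioc (0:ℝ) ((n:ℝ) ^ 2)⁻¹).indicator (fun _ => (n:ℝ)) ε + (n:ℝ)⁻¹) +
            (Set.Ioc εs 1).indicator (fun x : ℝ => x⁻¹) ε) := by
          apply integral_mono_of_nonneg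
          · filter_upwards [ae_restrict_mem measurableSet_Ioc] with x hx
            exact div_nonneg (hP01 x ⟨hx.1.le, hx.2⟩).1 hx.1.le
          · exact (hi1.add hi2).add hi3
          · filter_upwards [ae_restrict_mem measurableSet_Ioc] with x hx
            have hxI : x ∈ Set.Icc (0:ℝ) 1 := ⟨hx.1.le, hx.2⟩
            have hx0 := hx.1
            have hA : 0 ≤ (Set.Ioc (0:ℝ) ((n:ℝ) ^ 2)⁻¹).indicator (fun _ => (n:ℝ)) x :=
              Set.indicator_nonneg (fun _ _ => hn0.le) x
            have hB : 0 ≤ (Set.Ioc εs 1).indicator (fun x : ℝ => x⁻¹) x :=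
              Set.indicator_nonneg (fun y hy => inv_nonneg.2 (hε0.le.trans hy.1.le)) x
            have hC : 0 ≤ (n:ℝ)⁻¹ := by positivity
            show Pe x / x ≤ _
            by_cases h1 : εs < x
            · have h2 : Pe x / x ≤ x⁻¹ := by
                rw [div_eq_mul_inv]
                exact mul_le_of_le_one_left (by positivity) (hP01 x hxI).2
              rw [Set.indicator_of_mem (show x ∈ Set.Ioc εs 1 from ⟨h1, hx.2⟩)]
              linarith
            · by_cases h2 : x ≤ ((n:ℝ) ^ 2)⁻¹
              · have h3 : Pe x / x ≤ n := by
                  rw [div_le_iff₀ hx0]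
                  have h4 := one_add_mul_le_pow (show (-2:ℝ) ≤ -x by linarith [hx.2]) n
                  have h5 := hPn x hxI
                  rw [← sub_eq_add_neg] at h4
                  linarith
                rw [Set.indicator_of_mem (show x ∈ Set.Ioc (0:ℝ) ((n:ℝ) ^ 2)⁻¹ from ⟨hx0, h2⟩)]
                linarith
              · have h3 : Pe x / x ≤ (n:ℝ)⁻¹ := by
                  rw [div_le_iff₀ hx0]
                  have h4 : Pe x ≤ (n:ℝ) ^ (-(9:ℝ)) :=
                    (hmono hxI ⟨hε0.le, hε1⟩ (not_lt.1 h1)).trans hPs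
                  have h5 : (n:ℝ) ^ (-(9:ℝ)) ≤ (n:ℝ) ^ (-(3:ℝ)) :=
                    Real.rpow_le_rpow_of_exponent_le hn1' (by norm_num)
                  have h6 : (n:ℝ) ^ (-(3:ℝ)) = (n:ℝ)⁻¹ * ((n:ℝ) ^ 2)⁻¹ := by
                    rw [Real.rpow_neg hn0.le, ← mul_inv]
                    congr 1
                    have : (n:ℝ) ^ (3:ℝ) = (n:ℝ) ^ (3:ℕ) := by
                      rw [← Real.rpow_natCast]; norm_num
                    rw [this]; ring
                  have h7 : (n:ℝ)⁻¹ * ((n:ℝ) ^ 2)⁻¹ ≤ (n:ℝ)⁻¹ * x :=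
                    mul_le_mul_of_nonneg_left (not_le.1 h2).le hC
                  linarith
                linarith
      _ = 2 * (n:ℝ)⁻¹ + -Real.log εs := by
          have hi12 : Integrable (fun ε => (Set.Ioc (0:ℝ) ((n:ℝ) ^ 2)⁻¹).indicator (fun _ => (n:ℝ)) ε
              + (n:ℝ)⁻¹) (volume.restrict (Set.Ioc (0:ℝ) 1)) := hi1.add hi2
          rw [integral_add hi12 hi3, integral_add hi1 hi2,
            setIntegral_indicator measurableSet_Ioc, setIntegral_indicator measurableSet_Ioc,
            hsub, hsub', ← intervalIntegral.integral_of_le hε1,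
            integral_inv_of_pos hε0 one_pos]
          simp [hd0.le]
          field_simp
          ring
  have hfac : 0 ≤ 1 / (μs * (n:ℝ) * R) := by positivity
  have : ∫ ε in Set.Ioc (0:ℝ) 1, Pe ε / ε ≤
      -Real.log (1 - R) + (2 + 2 * c₂ / (1 - R)) * (n:ℝ) ^ (-γ) := by
    rw [add_mul]; linarith
  gcongr
end
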